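/- arXiv:2501.06923 — 9 statements merged into one kernel-verified Lean document; each statement's English description precedes it below -/
import Mathlib

section
/- For every integer T ≥ 1, the optimal house loss of the binary online bookmaking game equals T + √T; that is, the infimum over all binary house strategies {r_t} of the supremum over all bet sequences q^T ∈ [0,1]^T of the individual game loss equals T + √T. -/
/-!
If the house aims at total loss at most `L`, record the budgets `a = L - Σ q / r` and
`b = L - Σ (1 - q) / (1 - r)` still available on the two outcomes. With `n` rounds to go, the house
can keep both budgets nonnegative exactly when `(a, b)` lies in the convex region
`a ≥ n`, `b ≥ n`, `(a - n) * (b - n) ≥ n` (`Safe`).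

* From a safe state, the odds `r = (b - n + 1) / ((a - n) + (b - n) + 2)` lead to a safe state
  whatever the bet is (`Safe.step`), so starting at `L = T + √T` the house never overspends.
* Conversely, if the two pure bets `q = 1` and `q = 0` both lead from `(a, b)` to safe states, then
  weighting the two resulting inequalities by `r` and `1 - r` shows that `(a, b)` is safe
  (`Safe.of_pure_bets`). Backward induction over the rounds then makes the initial state `(L, L)`
  safe with `T` rounds to go, that is `(L - T) ^ 2 ≥ T`.

Bet sequences are extended to `ℕ → ℝ` so that histories of all lengths live in one type.
-/

/-- The individual game loss of a binary house strategy `r` against the bet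
sequence `q ∈ [0,1]^T`:
`max { Σ_t q_t / r_t(q^{t-1}) , Σ_t (1 - q_t) / (1 - r_t(q^{t-1})) }`. -/
noncomputable def contLoss (T : ℕ) (r : (t : Fin T) → (Fin t → ℝ) → ℝ)
    (q : Fin T → ℝ) : ℝ :=
  max (∑ t : Fin T, q t / r t (fun i => q (Fin.castLE t.2.le i)))
      (∑ t : Fin T, (1 - q t) / (1 - r t (fun i => q (Fin.castLE t.2.le i))))

/-- With `n` rounds to go, the remaining budgets `a` and `b` on the two outcomes suffice for the
house. The number of rounds is a real so that it can be subtracted freely. -/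
def Safe (n a b : ℝ) : Prop := n ≤ a ∧ n ≤ b ∧ n ≤ (a - n) * (b - n)

/-- The optimal odds with `n` rounds to go and remaining budgets `a` and `b`. -/
noncomputable def odds (n a b : ℝ) : ℝ := (b - n + 1) / ((a - n + 1) + (b - n + 1))

theorem Safe.odds_mem {n a b : ℝ} (h : Safe n a b) : odds n a b ∈ Set.Ioo (0 : ℝ) 1 := by
  obtain ⟨ha, hb, -⟩ := h
  unfold odds
  constructor
  · apply div_pos <;> linarith
  · rw [div_lt_one (by linarith)]
    linarith

/-- The optimal odds keep the state safe against every bet. -/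
theorem Safe.step {n a b q : ℝ} (hn : 1 ≤ n) (h : Safe n a b) (hq : q ∈ Set.Icc (0 : ℝ) 1) :
    Safe (n - 1) (a - q / odds n a b) (b - (1 - q) / (1 - odds n a b)) := by
  obtain ⟨ha, hb, hab⟩ := h
  obtain ⟨hq0, hq1⟩ := hq
  obtain ⟨α, rfl⟩ : ∃ α, a = α + n - 1 := ⟨a - n + 1, by ring⟩
  obtain ⟨β, rfl⟩ : ∃ β, b = β + n - 1 := ⟨b - n + 1, by ring⟩
  have hα : 0 < α := by linarith
  have hβ : 0 < β := by linarith
  have hs : 0 < α + β := by linarith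
  have hr : odds n (α + n - 1) (β + n - 1) = β / (α + β) := by unfold odds; congr 1 <;> ring
  have hr' : 1 - β / (α + β) = α / (α + β) := by field_simp; ring
  -- In these coordinates the region is `α * β - (α + β) ≥ n - 1`.
  have hm : n - 1 ≤ α * β - (α + β) := by nlinarith
  have e1 : α - q / (β / (α + β)) = (α * β - q * (α + β)) / β := by field_simp
  have e2 : β - (1 - q) / (α / (α + β)) = (α * β - (1 - q) * (α + β)) / α := by field_simp
  have h1 : 0 ≤ (α * β - q * (α + β)) / β := div_nonneg (by nlinarith) hβ.le
  have h2 : 0 ≤ (α * β - (1 - q) * (α + β)) / α := div_nonneg (by nlinarith) hα.le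
  rw [hr, hr']
  refine ⟨by linarith, by linarith, ?_⟩
  have e3 : (α + n - 1 - q / (β / (α + β)) - (n - 1)) *
      (β + n - 1 - (1 - q) / (α / (α + β)) - (n - 1)) =
      (α * β * (α * β - (α + β)) + q * (1 - q) * (α + β) ^ 2) / (α * β) := by
    field_simp
    ring
  rw [e3, le_div_iff₀ (by positivity)]
  have h3 : 0 ≤ q * (1 - q) * (α + β) ^ 2 :=
    mul_nonneg (mul_nonneg hq0 (by linarith)) (sq_nonneg _)
  nlinarith [mul_le_mul_of_nonneg_left hm (mul_pos hα hβ).le]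

/-- If both pure bets lead to safe states, then the current state is safe, whatever the odds. -/
theorem Safe.of_pure_bets {n a b r : ℝ} (hr : r ∈ Set.Ioo (0 : ℝ) 1)
    (h1 : Safe (n - 1) (a - 1 / r) b) (h0 : Safe (n - 1) a (b - 1 / (1 - r))) : Safe n a b := by
  obtain ⟨hr0, hr1⟩ := hr
  have hr1' : 0 < 1 - r := by linarith
  obtain ⟨h11, -, h13⟩ := h1
  obtain ⟨-, h02, h03⟩ := h0
  have i1 : 1 ≤ 1 / r := by rw [le_div_iff₀ hr0]; linarith
  have i0 : 1 ≤ 1 / (1 - r) := by rw [le_div_iff₀ hr1']; linarith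
  refine ⟨by linarith, by linarith, ?_⟩
  have j1 := mul_le_mul_of_nonneg_left h13 hr0.le
  have j0 := mul_le_mul_of_nonneg_left h03 hr1'.le
  have k1 : r * ((a - 1 / r - (n - 1)) * (b - (n - 1))) =
      (r * (a - (n - 1)) - 1) * (b - (n - 1)) := by
    field_simp
    ring
  have k0 : (1 - r) * ((a - (n - 1)) * (b - 1 / (1 - r) - (n - 1))) =
      (a - (n - 1)) * ((1 - r) * (b - (n - 1)) - 1) := by
    field_simp
    ring
  rw [k1] at j1
  rw [k0] at j0
  linarith

/-- The remaining budgets after `t` of `T` rounds against the bets `q`, when the house starts with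
the budgets `T + √T` and always posts the optimal odds. -/
noncomputable def budgets (T : ℕ) (q : ℕ → ℝ) : ℕ → ℝ × ℝ
  | 0 => (T + Real.sqrt T, T + Real.sqrt T)
  | t + 1 =>
    let s := budgets T q t
    (s.1 - q t / odds (T - t) s.1 s.2, s.2 - (1 - q t) / (1 - odds (T - t) s.1 s.2))

theorem budgets_congr (T : ℕ) {q q' : ℕ → ℝ} {t : ℕ} (h : ∀ i < t, q i = q' i) :
    budgets T q t = budgets T q' t := by
  induction t with
  | zero => rfl
  | succ t ih =>
    simp only [budgets, ih fun i hi => h i (hi.trans t.lt_succ_self), h t t.lt_succ_self]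

theorem safe_budgets (T : ℕ) {q : ℕ → ℝ} (hq : ∀ i, q i ∈ Set.Icc (0 : ℝ) 1) {t : ℕ}
    (ht : t ≤ T) : Safe (T - t) (budgets T q t).1 (budgets T q t).2 := by
  induction t with
  | zero =>
    have h := Real.sqrt_nonneg (T : ℝ)
    have h' := Real.mul_self_sqrt (Nat.cast_nonneg (α := ℝ) T)
    simp only [budgets, Safe]
    refine ⟨by simp, by simp, ?_⟩
    simp
  | succ t ih =>
    have hn : (1 : ℝ) ≤ T - t := by
      have : ((t + 1 : ℕ) : ℝ) ≤ T := by exact_mod_cast ht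
      push_cast at this
      linarith
    have := (ih (by omega)).step hn (hq t)
    simp only [budgets]
    push_cast
    rwa [← sub_sub]

/-- Extension of a finite bet history by the bet `0`. -/
def extend {n : ℕ} (q : Fin n → ℝ) (i : ℕ) : ℝ := if h : i < n then q ⟨i, h⟩ else 0

theorem extend_mem {n : ℕ} {q : Fin n → ℝ} (hq : ∀ i, q i ∈ Set.Icc (0 : ℝ) 1) (i : ℕ) :
    extend q i ∈ Set.Icc (0 : ℝ) 1 := by
  unfold extend
  split_ifs
  · exact hq _
  · simp

/-- The house guarantees `T + √T`. -/
theorem exists_strategy (T : ℕ) : ∃ r : (t : Fin T) → (Fin t → ℝ) → ℝ,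
    (∀ (t : Fin T) (qs : Fin t → ℝ),
      (∀ i, qs i ∈ Set.Icc (0 : ℝ) 1) → r t qs ∈ Set.Ioo (0 : ℝ) 1) ∧
    ∀ q : Fin T → ℝ, (∀ t, q t ∈ Set.Icc (0 : ℝ) 1) → contLoss T r q ≤ T + Real.sqrt T := by
  refine ⟨fun t qs => odds (T - (t : ℕ)) (budgets T (extend qs) t).1 (budgets T (extend qs) t).2,
    fun t qs hqs => (safe_budgets T (extend_mem hqs) t.2.le).odds_mem, fun q hq => ?_⟩
  have hcongr (t : Fin T) : budgets T (extend fun i : Fin t => q (Fin.castLE t.2.le i)) t =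
      budgets T (extend q) t := by
    refine budgets_congr T fun i hi => ?_
    simp [extend, hi, hi.trans t.2]
  have hval (t : Fin T) : q t = extend q t := by simp [extend]
  obtain ⟨h1, h2, -⟩ := safe_budgets T (extend_mem hq) le_rfl
  rw [sub_self] at h1 h2
  -- Both losses telescope to the initial budget minus the final one.
  have s1 := Finset.sum_range_sub' (fun t => (budgets T (extend q) t).1) T
  have s2 := Finset.sum_range_sub' (fun t => (budgets T (extend q) t).2) T
  simp only [budgets, sub_sub_cancel] at s1 s2
  unfold contLoss
  simp only [hcongr]
  simp only [hval]
  rw [Fin.sum_univ_eq_sum_range (fun t => extend q t /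
      odds (T - t) (budgets T (extend q) t).1 (budgets T (extend q) t).2),
    Fin.sum_univ_eq_sum_range (fun t => (1 - extend q t) /
      (1 - odds (T - t) (budgets T (extend q) t).1 (budgets T (extend q) t).2)), s1, s2]
  exact max_le (by linarith) (by linarith)

/-- Let `ρ q t` be the odds posted in round `t` by a nonanticipating strategy. If it never
overspends the budget `L` within `T` rounds, then with `n` rounds to go the state is safe. -/
theorem safe_of_loss_le {T : ℕ} {L : ℝ} {ρ : (ℕ → ℝ) → ℕ → ℝ}
    (hρ : ∀ q : ℕ → ℝ, (∀ i, q i ∈ Set.Icc (0 : ℝ) 1) → ∀ t < T, ρ q t ∈ Set.Ioo (0 : ℝ) 1)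
    (hcongr : ∀ (q q' : ℕ → ℝ) (t : ℕ), (∀ i < t, q i = q' i) → ρ q t = ρ q' t)
    (hL : ∀ q : ℕ → ℝ, (∀ i, q i ∈ Set.Icc (0 : ℝ) 1) →
      ∑ t ∈ Finset.range T, q t / ρ q t ≤ L ∧
      ∑ t ∈ Finset.range T, (1 - q t) / (1 - ρ q t) ≤ L)
    (n : ℕ) : ∀ (t : ℕ), t + n = T → ∀ q : ℕ → ℝ, (∀ i, q i ∈ Set.Icc (0 : ℝ) 1) →
      Safe n (L - ∑ i ∈ Finset.range t, q i / ρ q i)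
        (L - ∑ i ∈ Finset.range t, (1 - q i) / (1 - ρ q i)) := by
  induction n with
  | zero =>
    rintro t rfl q hq
    obtain ⟨h1, h2⟩ := hL q hq
    simp only [add_zero] at h1 h2
    have h1' := sub_nonneg.2 h1
    have h2' := sub_nonneg.2 h2
    refine ⟨by simpa using h1, by simpa using h2, ?_⟩
    simpa using mul_nonneg h1' h2'
  | succ n ih =>
    intro t ht q hq
    have hmem (c : ℝ) (hc : c ∈ Set.Icc (0 : ℝ) 1) (i : ℕ) :
        Function.update q t c i ∈ Set.Icc (0 : ℝ) 1 := by
      rw [Function.update_apply]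
      split_ifs
      exacts [hc, hq i]
    have hq' (c : ℝ) (i : ℕ) (hi : i < t) : Function.update q t c i = q i :=
      Function.update_of_ne hi.ne _ _
    have hρ' (c : ℝ) (i : ℕ) (hi : i ≤ t) : ρ (Function.update q t c) i = ρ q i :=
      hcongr _ _ _ fun j hj => hq' c j (hj.trans_le hi)
    have hX (c : ℝ) : ∑ i ∈ Finset.range (t + 1),
        Function.update q t c i / ρ (Function.update q t c) i =
        ∑ i ∈ Finset.range t, q i / ρ q i + c / ρ q t := by
      rw [Finset.sum_range_succ, hρ' c t le_rfl, Function.update_self]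
      congr 1
      refine Finset.sum_congr rfl fun i hi => ?_
      rw [Finset.mem_range] at hi
      rw [hq' c i hi, hρ' c i hi.le]
    have hY (c : ℝ) : ∑ i ∈ Finset.range (t + 1),
        (1 - Function.update q t c i) / (1 - ρ (Function.update q t c) i) =
        ∑ i ∈ Finset.range t, (1 - q i) / (1 - ρ q i) + (1 - c) / (1 - ρ q t) := by
      rw [Finset.sum_range_succ, hρ' c t le_rfl, Function.update_self]
      congr 1
      refine Finset.sum_congr rfl fun i hi => ?_
      rw [Finset.mem_range] at hi
      rw [hq' c i hi, hρ' c i hi.le]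
    have h1 := ih (t + 1) (by omega) _ (hmem 1 (by simp))
    have h0 := ih (t + 1) (by omega) _ (hmem 0 (by simp))
    rw [hX, hY] at h1 h0
    simp only [sub_self, zero_div, add_zero, sub_zero, ← sub_sub] at h1 h0
    refine Safe.of_pure_bets (hρ q hq t (by omega)) ?_ ?_
    · simpa using h1
    · simpa using h0

/-- No house strategy guarantees less than `T + √T`. -/
theorem le_of_strategy {T : ℕ} {L : ℝ} {r : (t : Fin T) → (Fin t → ℝ) → ℝ}
    (hr : ∀ (t : Fin T) (qs : Fin t → ℝ),
      (∀ i, qs i ∈ Set.Icc (0 : ℝ) 1) → r t qs ∈ Set.Ioo (0 : ℝ) 1)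
    (hL : ∀ q : Fin T → ℝ, (∀ t, q t ∈ Set.Icc (0 : ℝ) 1) → contLoss T r q ≤ L) :
    T + Real.sqrt T ≤ L := by
  -- Beyond the horizon the odds are irrelevant; `0` is a dummy value.
  let ρ : (ℕ → ℝ) → ℕ → ℝ := fun q t =>
    if h : t < T then r ⟨t, h⟩ (fun i => q i) else 0
  have key := safe_of_loss_le (T := T) (L := L) (ρ := ρ) ?_ ?_ ?_ T 0 (zero_add T) (fun _ => 0)
    (fun _ => by simp)
  · simp only [Finset.range_zero, Finset.sum_empty, sub_zero] at key
    obtain ⟨h1, -, h2⟩ := key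
    have : Real.sqrt T ≤ L - T := Real.sqrt_le_iff.2 ⟨by linarith, by nlinarith⟩
    linarith
  · intro q hq t ht
    simp only [ρ, ht, dif_pos]
    exact hr _ _ fun i => hq i
  · intro q q' t h
    simp only [ρ]
    split_ifs with ht
    · congr 1
      funext i
      exact h i i.2
    · rfl
  · intro q hq
    have h := max_le_iff.1 (hL (fun t => q t) fun t => hq t)
    rw [← Fin.sum_univ_eq_sum_range (fun t => q t / ρ q t),
      ← Fin.sum_univ_eq_sum_range (fun t => (1 - q t) / (1 - ρ q t))]
    simpa [ρ] using h

/-- The optimal house loss of the binary online bookmaking game with horizon `T ≥ 1`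
equals `T + √T`. -/
theorem optimal_house_loss (T : ℕ) (hT : 1 ≤ T) :
    sInf { L : ℝ | ∃ r : (t : Fin T) → (Fin t → ℝ) → ℝ,
        (∀ (t : Fin T) (qs : Fin t → ℝ),
            (∀ i, qs i ∈ Set.Icc (0:ℝ) 1) → r t qs ∈ Set.Ioo (0:ℝ) 1) ∧
        ∀ q : Fin T → ℝ, (∀ t, q t ∈ Set.Icc (0:ℝ) 1) → contLoss T r q ≤ L } =
      T + Real.sqrt T := by
  exact IsLeast.csInf_eq ⟨exists_strategy T, fun _ ⟨_, hr, hL⟩ => le_of_strategy hr hL⟩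
end

section
/- For every integer T ≥ 1, the optimal house loss of the binary online bookmaking game is achieved by decisive gamblers and skeleton strategies: the infimum over binary house strategies {r_t : [0,1]^{t-1} → (0,1)} of the supremum over q^T ∈ [0,1]^T of the individual game loss equals the infimum over skeleton strategies {r_t : {0,1}^{t-1} → (0,1)} of the maximum over decisive bet sequences q^T ∈ {0,1}^T of the individual game loss. -/
/-- Individual game loss of a skeleton strategy against a decisive bet
sequence `q ∈ {0,1}^T` (`true ↔ 1`). -/
noncomputable def skelLoss (T : ℕ) (r : (t : Fin T) → (Fin t → Bool) → ℝ)
    (q : Fin T → Bool) : ℝ :=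
  max (∑ t : Fin T, (if q t then (1:ℝ) else 0) / r t (fun i => q (Fin.castLE t.2.le i)))
      (∑ t : Fin T, (1 - if q t then (1:ℝ) else 0) /
        (1 - r t (fun i => q (Fin.castLE t.2.le i))))

/-- The probability of the bit string `b` when the coordinates are independent and the `i`-th is
`true` with probability `q i`. -/
def bernWeight {n : ℕ} (q : Fin n → ℝ) (b : Fin n → Bool) : ℝ :=
  ∏ i, if b i then q i else 1 - q i

/-- The expectation of `f` over a random bit string with independent coordinates, the `i`-th being
`true` with probability `q i`. -/
def bernMean {n : ℕ} (q : Fin n → ℝ) (f : (Fin n → Bool) → ℝ) : ℝ :=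
  ∑ b, bernWeight q b * f b

lemma bernWeight_nonneg {n : ℕ} {q : Fin n → ℝ} (hq : ∀ i, q i ∈ Set.Icc (0 : ℝ) 1)
    (b : Fin n → Bool) : 0 ≤ bernWeight q b := by
  refine Finset.prod_nonneg fun i _ => ?_
  have := hq i
  split_ifs
  · exact this.1
  · linarith [this.2]

/-- Conditioning on the last coordinate. -/
lemma bernMean_succ {n : ℕ} (q : Fin (n + 1) → ℝ) (f : (Fin (n + 1) → Bool) → ℝ) :
    bernMean q f =
      q (Fin.last n) * bernMean (fun i => q i.castSucc) (fun b => f (Fin.snoc b true)) +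
      (1 - q (Fin.last n)) * bernMean (fun i => q i.castSucc) (fun b => f (Fin.snoc b false)) := by
  unfold bernMean
  rw [← (Fin.snocEquiv (fun _ : Fin (n + 1) => Bool)).sum_comp, Fintype.sum_prod_type,
    Fintype.sum_bool, Finset.mul_sum, Finset.mul_sum]
  congr 1 <;>
  · refine Finset.sum_congr rfl fun b _ => ?_
    simp [bernWeight, Fin.snocEquiv, Fin.prod_univ_castSucc]
    ring

/-- The law of an initial segment of the random string is the Bernoulli law with the initial
segment of the parameters. -/
lemma bernMean_restrict {m n : ℕ} (h : m ≤ n) (q : Fin n → ℝ) (f : (Fin m → Bool) → ℝ) :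
    bernMean q (fun b => f (fun i => b (Fin.castLE h i))) =
      bernMean (fun i => q (Fin.castLE h i)) f := by
  induction n, h using Nat.le_induction with
  | base => rfl
  | succ n h ih =>
    have key (x : Bool) (b : Fin n → Bool) :
        (fun i : Fin m => (Fin.snoc b x : Fin (n + 1) → Bool) (Fin.castLE (h.trans n.le_succ) i)) =
          fun i => b (Fin.castLE h i) := by
      funext i
      exact Fin.snoc_castSucc (α := fun _ => Bool) x b (Fin.castLE h i)
    rw [bernMean_succ]
    simp only [key]
    rw [ih]
    simp only [Fin.castSucc_castLE]
    ring

lemma bernMean_const {n : ℕ} (q : Fin n → ℝ) (c : ℝ) : bernMean q (fun _ => c) = c := by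
  rw [bernMean_restrict (m := 0) n.zero_le q (fun _ => c)]
  simp [bernMean, bernWeight]

lemma sum_bernWeight {n : ℕ} (q : Fin n → ℝ) : ∑ b, bernWeight q b = 1 := by
  simpa [bernMean] using bernMean_const q 1

/-- The `t`-th coordinate is independent of the earlier ones. -/
lemma bernMean_coord_mul {T : ℕ} (q : Fin T → ℝ) (t : Fin T) (u : Bool → ℝ)
    (f : (Fin t → Bool) → ℝ) :
    bernMean q (fun b => u (b t) * f (fun i => b (Fin.castLE t.2.le i))) =
      (q t * u true + (1 - q t) * u false) *
        bernMean (fun i => q (Fin.castLE t.2.le i)) f := by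
  have h := bernMean_restrict (Nat.succ_le_of_lt t.2) q
    (fun c : Fin (t + 1) → Bool => u (c (Fin.last t)) * f (fun i => c i.castSucc))
  refine h.trans ?_
  rw [bernMean_succ]
  simp only [Fin.snoc_last, Fin.snoc_castSucc]
  have hc (x : ℝ) (p : Fin t → ℝ) : bernMean p (fun b => x * f b) = x * bernMean p f := by
    simp only [bernMean, Finset.mul_sum]
    exact Finset.sum_congr rfl fun b _ => by ring
  rw [hc, hc]
  have e : q (Fin.castLE (Nat.succ_le_of_lt t.2) (Fin.last t)) = q t := rfl
  rw [e]
  change q t * (u true * bernMean (fun i => q (Fin.castLE t.2.le i)) f) +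
    (1 - q t) * (u false * bernMean (fun i => q (Fin.castLE t.2.le i)) f) = _
  ring

lemma bernMean_mono {n : ℕ} {q : Fin n → ℝ} (hq : ∀ i, q i ∈ Set.Icc (0 : ℝ) 1)
    {f g : (Fin n → Bool) → ℝ} (h : ∀ b, f b ≤ g b) : bernMean q f ≤ bernMean q g :=
  Finset.sum_le_sum fun b _ => mul_le_mul_of_nonneg_left (h b) (bernWeight_nonneg hq b)

lemma bernMean_mem_Ioo {n : ℕ} {q : Fin n → ℝ} (hq : ∀ i, q i ∈ Set.Icc (0 : ℝ) 1)
    {f : (Fin n → Bool) → ℝ} (hf : ∀ b, f b ∈ Set.Ioo (0 : ℝ) 1) :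
    bernMean q f ∈ Set.Ioo (0 : ℝ) 1 :=
  (convex_Ioo (0 : ℝ) 1).sum_mem (fun b _ => bernWeight_nonneg hq b) (sum_bernWeight q)
    fun b _ => hf b

lemma bernMean_one_sub {n : ℕ} (q : Fin n → ℝ) (f : (Fin n → Bool) → ℝ) :
    bernMean q (fun b => 1 - f b) = 1 - bernMean q f := by
  simp [bernMean, mul_sub, sum_bernWeight]

/-- Jensen's inequality for `x ↦ 1/x`. -/
lemma inv_bernMean_le {n : ℕ} {q : Fin n → ℝ} (hq : ∀ i, q i ∈ Set.Icc (0 : ℝ) 1)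
    {f : (Fin n → Bool) → ℝ} (hf : ∀ b, f b ∈ Set.Ioo (0 : ℝ) 1) :
    (bernMean q f)⁻¹ ≤ bernMean q (fun b => (f b)⁻¹) := by
  have h := (convexOn_zpow (𝕜 := ℝ) (-1)).map_sum_le (t := Finset.univ) (w := bernWeight q) (p := f)
    (fun b _ => bernWeight_nonneg hq b) (sum_bernWeight q) (fun b _ => (hf b).1)
  simpa [bernMean] using h

lemma bernMean_sum {n : ℕ} {ι : Type*} [Fintype ι] (q : Fin n → ℝ)
    (f : ι → (Fin n → Bool) → ℝ) :
    bernMean q (fun b => ∑ t, f t b) = ∑ t, bernMean q (f t) := by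
  simp only [bernMean, Finset.mul_sum]
  exact Finset.sum_comm

/-- One of the two totals under averaging: if the total payout of `f`, paying `u (b t)` units at
price `f t` in round `t`, is at most `L` on every decisive sequence `b`, then averaging the stakes
and the prices over the Bernoulli law of `q` keeps the total at most `L`. -/
lemma sum_mean_le {T : ℕ} {q : Fin T → ℝ} (hq : ∀ i, q i ∈ Set.Icc (0 : ℝ) 1)
    {f : (t : Fin T) → (Fin t → Bool) → ℝ} (hf : ∀ t b, f t b ∈ Set.Ioo (0 : ℝ) 1)
    {u : Bool → ℝ} (hu : ∀ x, 0 ≤ u x) {L : ℝ}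
    (h : ∀ b : Fin T → Bool, ∑ t, u (b t) / f t (fun i => b (Fin.castLE t.2.le i)) ≤ L) :
    ∑ t, (q t * u true + (1 - q t) * u false) /
      bernMean (fun i => q (Fin.castLE t.2.le i)) (f t) ≤ L := by
  calc _ ≤ ∑ t, bernMean q
        (fun b => u (b t) * (f t (fun i => b (Fin.castLE t.2.le i)))⁻¹) := by
        refine Finset.sum_le_sum fun t _ => ?_
        rw [bernMean_coord_mul q t u (fun c => (f t c)⁻¹), div_eq_mul_inv]
        refine mul_le_mul_of_nonneg_left (inv_bernMean_le (fun i => hq _) (hf t)) ?_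
        have h1 := mul_nonneg (hq t).1 (hu true)
        have h2 := mul_nonneg (sub_nonneg.2 (hq t).2) (hu false)
        linarith
    _ = bernMean q (fun b => ∑ t, u (b t) / f t (fun i => b (Fin.castLE t.2.le i))) := by
        simp only [bernMean_sum, div_eq_mul_inv]
    _ ≤ bernMean q (fun _ => L) := bernMean_mono hq h
    _ = L := bernMean_const q L

/-- The optimal house loss of the binary online bookmaking game is achieved by
decisive gamblers and skeleton strategies. -/
theorem decisive_gamblers_optimal_binary (T : ℕ) (hT : 1 ≤ T) :
    sInf { L : ℝ | ∃ r : (t : Fin T) → (Fin t → ℝ) → ℝ,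
        (∀ (t : Fin T) (qs : Fin t → ℝ),
            (∀ i, qs i ∈ Set.Icc (0:ℝ) 1) → r t qs ∈ Set.Ioo (0:ℝ) 1) ∧
        ∀ q : Fin T → ℝ, (∀ t, q t ∈ Set.Icc (0:ℝ) 1) → contLoss T r q ≤ L } =
    sInf { L : ℝ | ∃ r : (t : Fin T) → (Fin t → Bool) → ℝ,
        (∀ (t : Fin T) (qs : Fin t → Bool), r t qs ∈ Set.Ioo (0:ℝ) 1) ∧
        ∀ q : Fin T → Bool, skelLoss T r q ≤ L } := by
  congr 1
  ext L
  constructor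
  · rintro ⟨r, hr, hL⟩
    have hb (x : Bool) : (if x then (1 : ℝ) else 0) ∈ Set.Icc (0 : ℝ) 1 := by
      cases x <;> simp
    exact ⟨fun t b => r t (fun i => if b i then 1 else 0), fun t b => hr t _ fun i => hb _,
      fun b => hL (fun t => if b t then 1 else 0) fun t => hb _⟩
  · rintro ⟨R, hR, hL⟩
    refine ⟨fun t q => bernMean q (R t), fun t q hq => bernMean_mem_Ioo hq (hR t),
      fun q hq => max_le ?_ ?_⟩
    · have h := sum_mean_le hq hR (u := fun x => if x then 1 else 0)
        (fun x => by cases x <;> simp) (fun b => (le_max_left _ _).trans (hL b))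
      simpa using h
    · have h := sum_mean_le hq (f := fun t b => 1 - R t b)
        (fun t b => ⟨sub_pos.2 (hR t b).2, sub_lt_self _ (hR t b).1⟩)
        (u := fun x => 1 - if x then 1 else 0)
        (fun x => by cases x <;> simp) (fun b => (le_max_right _ _).trans (hL b))
      simpa [bernMean_one_sub] using h
end

section
/- In the convex-linear-max game with horizon T and m outcomes, the optimal loss can be achieved with a decisive second player and skeleton strategies: the infimum over all strategies {φ_t : (Δ_m)^{t-1} → Δ_m} of the supremum over q^T ∈ (Δ_m)^T of max_{i∈[m]} Σ_{t=1}^T q_t(i)·g_i(φ_t(q^{t-1})) equals the infimum over skeleton strategies {φ^D_t : {e_0,…,e_{m-1}}^{t-1} → Δ_m} of the maximum over vertex sequences x^T ∈ {e_0,…,e_{m-1}}^T of max_{i∈[m]} Σ_{t=1}^T 1{x_t = e_i}·g_i(φ^D_t(x^{t-1})). -/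
/-!
The two sets of achievable losses coincide, so their infima do.

A strategy restricts to a skeleton strategy by feeding it vertices only, which cannot increase the
loss. Conversely, given a skeleton strategy `φD`, let the first player play the expected move
`φ_t(q^{t-1}) = 𝔼 φD_t(x^{t-1})`, where the `x_s` are independent with laws `q_s` (`mixedStrategy`).
By Jensen's inequality `g_i(φ_t(q^{t-1})) ≤ 𝔼 g_i(φD_t(x^{t-1}))`, and since `x_t` is independent of
the past, `∑ t, q_t(i) g_i(φ_t(q^{t-1})) ≤ 𝔼 ∑ t, 1{x_t = i} g_i(φD_t(x^{t-1}))`. The right-hand side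
is an average of losses against vertex sequences, hence at most the worst of them. The independence
is the marginalisation identity `sum_prod_castLE` for product weights.
-/

/-- Total mass one of a product of weights each of total mass one. -/
theorem sum_prod_eq_one {m n : ℕ} (w : Fin n → Fin m → ℝ) (hw : ∀ s, ∑ j, w s j = 1) :
    ∑ x : Fin n → Fin m, ∏ s, w s (x s) = 1 := by
  rw [← Fintype.prod_sum]
  simp [hw]

/-- Marginalisation: under a product weight, a function of the first `k` coordinates may be averaged
over those coordinates only. -/
theorem sum_prod_castLE {m n k : ℕ} (h : k ≤ n) (w : Fin n → Fin m → ℝ)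
    (hw : ∀ s, ∑ j, w s j = 1) (F : (Fin k → Fin m) → ℝ) :
    ∑ x : Fin n → Fin m, (∏ s, w s (x s)) * F (fun s => x (Fin.castLE h s)) =
      ∑ y : Fin k → Fin m, (∏ s, w (Fin.castLE h s) (y s)) * F y := by
  obtain ⟨r, rfl⟩ := Nat.exists_eq_add_of_le h
  rw [← (Fin.appendEquiv k r).sum_comp, Fintype.sum_prod_type]
  refine Finset.sum_congr rfl fun y _ => ?_
  have hc : ∀ s : Fin k, Fin.castLE h s = Fin.castAdd r s := fun _ => rfl
  simp only [Fin.appendEquiv, Equiv.coe_fn_mk, hc, Fin.append_left, Fin.prod_univ_add,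
    Fin.append_right]
  rw [← Finset.sum_mul, ← Finset.mul_sum,
    sum_prod_eq_one (fun s => w (Fin.natAdd k s)) (fun s => hw _), mul_one]

/-- Marginalisation when the function depends on the past of `t` and on whether the `t`-th
coordinate equals `i`: the latter event is independent of the past. -/
theorem sum_prod_indicator {m n : ℕ} (t : Fin n) (w : Fin n → Fin m → ℝ)
    (hw : ∀ s, ∑ j, w s j = 1) (i : Fin m) (G : (Fin t → Fin m) → ℝ) :
    ∑ x : Fin n → Fin m, (∏ s, w s (x s)) *
        ((if x t = i then (1 : ℝ) else 0) * G (fun s => x (Fin.castLE t.2.le s))) =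
      w t i * ∑ y : Fin t → Fin m, (∏ s, w (Fin.castLE t.2.le s) (y s)) * G y := by
  have ht : (t : ℕ) + 1 ≤ n := t.2
  have h := sum_prod_castLE ht w hw
    (fun y => (if y (Fin.last t) = i then (1 : ℝ) else 0) * G (fun s => y s.castSucc))
  refine h.trans ?_
  rw [← (Fin.snocEquiv fun _ : Fin (t + 1) => Fin m).sum_comp, Fintype.sum_prod_type_right,
    Finset.mul_sum]
  refine Finset.sum_congr rfl fun y _ => ?_
  have hlast : Fin.castLE ht (Fin.last t) = t := rfl
  have hcast : ∀ s : Fin t, Fin.castLE ht s.castSucc = Fin.castLE t.2.le s := fun _ => rfl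
  simp only [Fin.snocEquiv, Equiv.coe_fn_mk, Fin.prod_univ_castSucc, Fin.snoc_castSucc,
    Fin.snoc_last, hlast, hcast]
  simp only [ite_mul, one_mul, zero_mul, mul_ite, mul_zero, Finset.sum_ite_eq', Finset.mem_univ,
    if_true]
  ring

/-- The expected move of the skeleton strategy `φD` when the past outcomes are drawn independently
from the distributions `qs`. -/
noncomputable def mixedStrategy {m k : ℕ} (φD : (Fin k → Fin m) → Fin m → ℝ)
    (qs : Fin k → Fin m → ℝ) : Fin m → ℝ :=
  ∑ y : Fin k → Fin m, (∏ s, qs s (y s)) • φD y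

theorem mixedStrategy_mem {m k : ℕ} {φD : (Fin k → Fin m) → Fin m → ℝ}
    (hφ : ∀ y, φD y ∈ stdSimplex ℝ (Fin m)) {qs : Fin k → Fin m → ℝ}
    (hq : ∀ s, qs s ∈ stdSimplex ℝ (Fin m)) :
    mixedStrategy φD qs ∈ stdSimplex ℝ (Fin m) :=
  (convex_stdSimplex ℝ (Fin m)).sum_mem (fun _ _ => Finset.prod_nonneg fun s _ => (hq s).1 _)
    (sum_prod_eq_one qs fun s => (hq s).2) fun y _ => hφ y

/-- Jensen's inequality for the expected move. -/
theorem map_mixedStrategy_le {m k : ℕ} {f : (Fin m → ℝ) → ℝ}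
    (hf : ConvexOn ℝ (stdSimplex ℝ (Fin m)) f) {φD : (Fin k → Fin m) → Fin m → ℝ}
    (hφ : ∀ y, φD y ∈ stdSimplex ℝ (Fin m)) {qs : Fin k → Fin m → ℝ}
    (hq : ∀ s, qs s ∈ stdSimplex ℝ (Fin m)) :
    f (mixedStrategy φD qs) ≤ ∑ y : Fin k → Fin m, (∏ s, qs s (y s)) * f (φD y) :=
  hf.map_sum_le (fun _ _ => Finset.prod_nonneg fun s _ => (hq s).1 _)
    (sum_prod_eq_one qs fun s => (hq s).2) fun y _ => hφ y


/-- In the convex-linear-max game with horizon `T` and `m` outcomes, the optimal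
loss can be achieved with a decisive second player and skeleton strategies. -/
theorem convex_linear_max_decisive (m T : ℕ) (hm : 0 < m) (hT : 1 ≤ T)
    (g : Fin m → (Fin m → ℝ) → ℝ)
    (hg : ∀ i, ConvexOn ℝ (stdSimplex ℝ (Fin m)) (g i)) :
    sInf { L : ℝ | ∃ φ : (t : Fin T) → (Fin t → (Fin m → ℝ)) → (Fin m → ℝ),
        (∀ (t : Fin T) (qs : Fin t → (Fin m → ℝ)),
            (∀ i, qs i ∈ stdSimplex ℝ (Fin m)) → φ t qs ∈ stdSimplex ℝ (Fin m)) ∧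
        ∀ q : Fin T → (Fin m → ℝ), (∀ t, q t ∈ stdSimplex ℝ (Fin m)) →
          (⨆ i : Fin m, ∑ t : Fin T,
              q t i * g i (φ t (fun s => q (Fin.castLE t.2.le s)))) ≤ L } =
    sInf { L : ℝ | ∃ φD : (t : Fin T) → (Fin t → Fin m) → (Fin m → ℝ),
        (∀ (t : Fin T) (xs : Fin t → Fin m), φD t xs ∈ stdSimplex ℝ (Fin m)) ∧
        ∀ x : Fin T → Fin m,
          (⨆ i : Fin m, ∑ t : Fin T, (if x t = i then (1:ℝ) else 0) *
              g i (φD t (fun s => x (Fin.castLE t.2.le s)))) ≤ L } := by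
  haveI : Nonempty (Fin m) := ⟨⟨0, hm⟩⟩
  congr 1
  ext L
  constructor
  · rintro ⟨φ, hφ, hL⟩
    have hv : ∀ j : Fin m, (Pi.single j 1 : Fin m → ℝ) ∈ stdSimplex ℝ (Fin m) :=
      single_mem_stdSimplex ℝ
    refine ⟨fun t xs => φ t fun s => Pi.single (xs s) 1, fun t xs => hφ t _ fun s => hv _,
      fun x => ?_⟩
    have h := hL (fun t => Pi.single (x t) 1) fun t => hv _
    simpa only [Pi.single_apply, eq_comm] using h
  · rintro ⟨φD, hφ, hL⟩
    refine ⟨fun t => mixedStrategy (φD t), fun t qs hq => mixedStrategy_mem (hφ t) hq,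
      fun q hq => ciSup_le fun i => ?_⟩
    have hx : ∀ x : Fin T → Fin m, ∑ t : Fin T, (if x t = i then (1 : ℝ) else 0) *
        g i (φD t (fun s => x (Fin.castLE t.2.le s))) ≤ L := fun x =>
      (le_ciSup (f := fun i => ∑ t : Fin T, (if x t = i then (1 : ℝ) else 0) *
        g i (φD t (fun s => x (Fin.castLE t.2.le s)))) (Set.finite_range _).bddAbove i).trans (hL x)
    calc ∑ t : Fin T, q t i * g i (mixedStrategy (φD t) fun s => q (Fin.castLE t.2.le s))
        ≤ ∑ t : Fin T, q t i * ∑ y : Fin t → Fin m,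
            (∏ s, q (Fin.castLE t.2.le s) (y s)) * g i (φD t y) :=
          Finset.sum_le_sum fun t _ => mul_le_mul_of_nonneg_left
            (map_mixedStrategy_le (hg i) (hφ t) fun s => hq _) ((hq t).1 i)
      _ = ∑ t : Fin T, ∑ x : Fin T → Fin m, (∏ s, q s (x s)) *
            ((if x t = i then (1 : ℝ) else 0) * g i (φD t fun s => x (Fin.castLE t.2.le s))) :=
          Finset.sum_congr rfl fun t _ =>
            (sum_prod_indicator t q (fun s => (hq s).2) i fun y => g i (φD t y)).symm
      _ = ∑ x : Fin T → Fin m, (∏ s, q s (x s)) * ∑ t : Fin T,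
            (if x t = i then (1 : ℝ) else 0) * g i (φD t fun s => x (Fin.castLE t.2.le s)) := by
          rw [Finset.sum_comm]
          simp only [Finset.mul_sum]
      _ ≤ ∑ x : Fin T → Fin m, (∏ s, q s (x s)) * L :=
          Finset.sum_le_sum fun x _ => mul_le_mul_of_nonneg_left (hx x)
            (Finset.prod_nonneg fun s _ => (hq s).1 _)
      _ = L := by
          rw [← Finset.sum_mul, sum_prod_eq_one q fun s => (hq s).2, one_mul]
end

section
/- Let {φ^D_t} be any skeleton strategy for the convex-linear-max game and let {φ̄_t} be its expected skeleton strategy, defined by φ̄_t(q^{t-1}) = Σ_{x^{t-1} ∈ {e_0,…,e_{m-1}}^{t-1}} ( Π_{i=1}^{t-1} q_i(x_i) ) · φ^D_t(x^{t-1}), where q_i(x_i) denotes the coordinate of q_i corresponding to the vertex x_i. Then for every q^T ∈ (Δ_m)^T, max_{i∈[m]} Σ_{t=1}^T q_t(i)·g_i(φ̄_t(q^{t-1})) ≤ max over vertex sequences x^T ∈ {e_0,…,e_{m-1}}^T of max_{i∈[m]} Σ_{t=1}^T 1{x_t = e_i}·g_i(φ^D_t(x^{t-1})). -/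
/-!
Draw `x : Fin T → Fin m` with independent coordinates, `x t` having law `q t`. By Jensen's inequality
`g i` at the averaged strategy is at most the average of `g i (φD t ·)` over the prefix of length `t`,
and since `x t` is independent of that prefix (`sum_prod_mul_indicator_prefix`), the `i`-th loss of
the expected strategy is at most the expectation of the `i`-th loss of `φD` against `x`. An
expectation is at most the maximum.
-/

/-- Sum over sequences of length `n + 1`, split as a sequence of length `n` and a last entry. -/
lemma sum_snoc {m n : ℕ} (f : (Fin (n + 1) → Fin m) → ℝ) :
    ∑ x, f x = ∑ y : Fin n → Fin m, ∑ a : Fin m, f (Fin.snoc (α := fun _ => Fin m) y a) := by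
  rw [← (Fin.snocEquiv (fun _ : Fin (n + 1) => Fin m)).sum_comp, Fintype.sum_prod_type,
    Finset.sum_comm]
  rfl

/-- Under a product of probability weights, the law of a prefix is the product of the
corresponding weights. -/
lemma sum_prod_mul_prefix {m n T : ℕ} (h : n ≤ T) (q : Fin T → Fin m → ℝ)
    (hq : ∀ t, ∑ a, q t a = 1) (F : (Fin n → Fin m) → ℝ) :
    ∑ x : Fin T → Fin m, (∏ s, q s (x s)) * F (fun s => x (Fin.castLE h s)) =
      ∑ y : Fin n → Fin m, (∏ s, q (Fin.castLE h s) (y s)) * F y := by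
  induction T, h using Nat.le_induction with
  | base => simp
  | succ T h ih =>
    have key := ih (fun s => q s.castSucc) (fun s => hq _)
    have hc : ∀ s : Fin n, Fin.castLE (Nat.le_succ_of_le h) s = (Fin.castLE h s).castSucc :=
      fun s => rfl
    simp only [hc]
    rw [← key, sum_snoc]
    refine Finset.sum_congr rfl fun y _ => ?_
    simp only [Fin.prod_univ_castSucc, Fin.snoc_castSucc, Fin.snoc_last]
    rw [← Finset.sum_mul, ← Finset.mul_sum, hq, mul_one]

/-- Under a product of probability weights, the entry at time `t` is independent of the entries
before `t`. -/
lemma sum_prod_mul_indicator_prefix {m T : ℕ} (t : Fin T) (i : Fin m) (q : Fin T → Fin m → ℝ)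
    (hq : ∀ t, ∑ a, q t a = 1) (F : (Fin t → Fin m) → ℝ) :
    ∑ x : Fin T → Fin m, (∏ s, q s (x s)) *
        ((if x t = i then (1:ℝ) else 0) * F (fun s => x (Fin.castLE t.2.le s))) =
      q t i * ∑ y : Fin t → Fin m, (∏ s, q (Fin.castLE t.2.le s) (y s)) * F y := by
  have key := sum_prod_mul_prefix (n := (t : ℕ) + 1) t.2 q hq
    (fun z => (if z (Fin.last t) = i then (1:ℝ) else 0) * F (fun s => z s.castSucc))
  have hlast : Fin.castLE t.2 (Fin.last (t : ℕ)) = t := rfl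
  have hc : ∀ s : Fin t, Fin.castLE t.2 s.castSucc = Fin.castLE t.2.le s := fun s => rfl
  simp only [hlast, hc] at key
  rw [key, sum_snoc, Finset.mul_sum]
  refine Finset.sum_congr rfl fun y _ => ?_
  simp only [Fin.prod_univ_castSucc, Fin.snoc_castSucc, Fin.snoc_last, hlast, hc]
  rw [Finset.sum_eq_single i (fun a _ ha => by simp [ha]) (by simp)]
  simp only [if_true]
  ring

/-- The expected skeleton strategy of a skeleton strategy `φD` of the
convex-linear-max game performs, against any sequence of simplex points, at most
as badly as `φD` performs against the worst vertex (decisive) sequence. -/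
theorem expected_skeleton_strategy_bound (m T : ℕ) (hm : 0 < m)
    (g : Fin m → (Fin m → ℝ) → ℝ)
    (hg : ∀ i, ConvexOn ℝ (stdSimplex ℝ (Fin m)) (g i))
    (φD : (t : Fin T) → (Fin t → Fin m) → (Fin m → ℝ))
    (hφD : ∀ (t : Fin T) (xs : Fin t → Fin m), φD t xs ∈ stdSimplex ℝ (Fin m))
    (q : Fin T → (Fin m → ℝ)) (hq : ∀ t, q t ∈ stdSimplex ℝ (Fin m)) :
    (⨆ i : Fin m, ∑ t : Fin T, q t i *
        g i (fun j => ∑ x : Fin t → Fin m,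
          (∏ s : Fin t, q (Fin.castLE t.2.le s) (x s)) * φD t x j)) ≤
    ⨆ x : Fin T → Fin m, ⨆ i : Fin m, ∑ t : Fin T,
      (if x t = i then (1:ℝ) else 0) * g i (φD t (fun s => x (Fin.castLE t.2.le s))) := by
  have hq1 : ∀ t, ∑ a, q t a = 1 := fun t => (hq t).2
  have : Nonempty (Fin m) := ⟨⟨0, hm⟩⟩
  refine ciSup_le fun i => ?_
  set M := ⨆ x : Fin T → Fin m, ⨆ i : Fin m, ∑ t : Fin T,
      (if x t = i then (1:ℝ) else 0) * g i (φD t (fun s => x (Fin.castLE t.2.le s)))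
  have hle : ∀ x : Fin T → Fin m, ∑ t : Fin T,
      (if x t = i then (1:ℝ) else 0) * g i (φD t (fun s => x (Fin.castLE t.2.le s))) ≤ M :=
    fun x => (le_ciSup (f := fun i : Fin m => ∑ t : Fin T,
      (if x t = i then (1:ℝ) else 0) * g i (φD t (fun s => x (Fin.castLE t.2.le s))))
      (Set.finite_range _).bddAbove i).trans
      (le_ciSup (f := fun x : Fin T → Fin m => ⨆ i : Fin m, ∑ t : Fin T,
      (if x t = i then (1:ℝ) else 0) * g i (φD t (fun s => x (Fin.castLE t.2.le s))))
      (Set.finite_range _).bddAbove x)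
  -- Total mass one: expand the product of the sums of the weights.
  have hmass : ∀ (n : ℕ) (h : n ≤ T),
      ∑ x : Fin n → Fin m, ∏ s, q (Fin.castLE h s) (x s) = 1 := by
    intro n h
    rw [← Fintype.prod_sum (fun s a => q (Fin.castLE h s) a)]
    simp [hq1]
  have hjensen : ∀ t : Fin T,
      g i (fun j => ∑ x : Fin t → Fin m,
          (∏ s : Fin t, q (Fin.castLE t.2.le s) (x s)) * φD t x j) ≤
        ∑ x : Fin t → Fin m, (∏ s : Fin t, q (Fin.castLE t.2.le s) (x s)) * g i (φD t x) := by
    intro t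
    have h := (hg i).map_sum_le (t := Finset.univ)
      (w := fun x : Fin t → Fin m => ∏ s : Fin t, q (Fin.castLE t.2.le s) (x s)) (p := φD t)
      (fun x _ => Finset.prod_nonneg fun s _ => (hq _).1 _) (hmass t t.2.le) (fun x _ => hφD t x)
    simp only [smul_eq_mul] at h
    refine le_trans (le_of_eq (congrArg (g i) ?_)) h
    ext j
    simp [Finset.sum_apply]
  calc _ ≤ ∑ t : Fin T, q t i * ∑ x : Fin t → Fin m,
          (∏ s : Fin t, q (Fin.castLE t.2.le s) (x s)) * g i (φD t x) :=
        Finset.sum_le_sum fun t _ => mul_le_mul_of_nonneg_left (hjensen t) ((hq t).1 i)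
    _ = ∑ x : Fin T → Fin m, (∏ s, q s (x s)) * ∑ t : Fin T,
          (if x t = i then (1:ℝ) else 0) * g i (φD t (fun s => x (Fin.castLE t.2.le s))) := by
        simp only [Finset.mul_sum (s := (Finset.univ : Finset (Fin T)))]
        rw [Finset.sum_comm]
        exact Finset.sum_congr rfl fun t _ =>
          (sum_prod_mul_indicator_prefix t i q hq1 (fun y => g i (φD t y))).symm
    _ ≤ ∑ x : Fin T → Fin m, (∏ s, q s (x s)) * M :=
        Finset.sum_le_sum fun x _ => mul_le_mul_of_nonneg_left (hle x)
          (Finset.prod_nonneg fun s _ => (hq s).1 _)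
    _ = M := by
        have h := hmass T le_rfl
        simp only [Fin.castLE_rfl, id] at h
        rw [← Finset.sum_mul, h, one_mul]
end

section
/- An optimal decisive gambler places its final bet on the winning team: for every integer T ≥ 1, the infimum over skeleton strategies {r_t} of the maximum over q^T ∈ {0,1}^T of max{ Σ_{t=1}^T (1−q_t)/(1−r_t(q^{t-1})) , Σ_{t=1}^T q_t/r_t(q^{t-1}) } equals the infimum over skeleton strategies of the maximum over q^T ∈ {0,1}^T of g({r_t}, q^T), where g({r_t}, q^T) = Σ_{t=1}^T (1−q_t)/(1−r_t(q^{t-1})) if q_T = 0 and g({r_t}, q^T) = Σ_{t=1}^T q_t/r_t(q^{t-1}) if q_T = 1. -/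
/-- The last bet `q_T` of a decisive bet sequence. -/
def lastBit (T : ℕ) (q : Fin T → Bool) : Bool :=
  if h : 0 < T then q ⟨T - 1, by omega⟩ else false

/-- The loss `g({r_t}, q^T)`, where the event's outcome coincides with the
gambler's final bet:
`g = 1{q_T = 0}·Σ_t (1−q_t)/(1−r_t(q^{t-1})) + 1{q_T = 1}·Σ_t q_t/r_t(q^{t-1})`. -/
noncomputable def gLoss (T : ℕ) (r : (t : Fin T) → (Fin t → Bool) → ℝ)
    (q : Fin T → Bool) : ℝ :=
  if lastBit T q then
    ∑ t : Fin T, (if q t then (1:ℝ) else 0) / r t (fun i => q (Fin.castLE t.2.le i))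
  else
    ∑ t : Fin T, (1 - if q t then (1:ℝ) else 0) /
      (1 - r t (fun i => q (Fin.castLE t.2.le i)))

/-- The history seen at round `t` does not contain the last bet. -/
lemma history_update_last {T : ℕ} (hT : 0 < T) (q : Fin T → Bool) (b : Bool) (t : Fin T) :
    (fun i : Fin t => Function.update q ⟨T - 1, by omega⟩ b (Fin.castLE t.2.le i)) =
      fun i : Fin t => q (Fin.castLE t.2.le i) := by
  funext i
  apply Function.update_of_ne
  intro h
  have h1 := congrArg Fin.val h
  have h2 := i.2
  have h3 := t.2
  simp only [Fin.val_castLE] at h1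
  omega

lemma lastBit_update_last {T : ℕ} (hT : 0 < T) (q : Fin T → Bool) (b : Bool) :
    lastBit T (Function.update q ⟨T - 1, by omega⟩ b) = b := by
  simp [lastBit, hT]

lemma gLoss_le_skelLoss (T : ℕ) (r : (t : Fin T) → (Fin t → Bool) → ℝ) (q : Fin T → Bool) :
    gLoss T r q ≤ skelLoss T r q := by
  unfold gLoss skelLoss
  split_ifs
  · exact le_max_left _ _
  · exact le_max_right _ _

lemma skelLoss_le_of_forall_gLoss_le {T : ℕ} (hT : 0 < T)
    (r : (t : Fin T) → (Fin t → Bool) → ℝ)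
    (hr : ∀ (t : Fin T) (qs : Fin t → Bool), r t qs ∈ Set.Ioo (0 : ℝ) 1) {L : ℝ}
    (h : ∀ q : Fin T → Bool, gLoss T r q ≤ L) (q : Fin T → Bool) :
    skelLoss T r q ≤ L := by
  refine max_le ?_ ?_
  · refine le_trans ?_ (h (Function.update q ⟨T - 1, by omega⟩ true))
    rw [gLoss, if_pos (lastBit_update_last hT q true)]
    refine Finset.sum_le_sum fun t _ => ?_
    rw [history_update_last hT]
    refine div_le_div_of_nonneg_right ?_ (hr t _).1.le
    by_cases ht : t = ⟨T - 1, by omega⟩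
    · subst ht
      rw [Function.update_self]
      cases q ⟨T - 1, by omega⟩ <;> norm_num
    · rw [Function.update_of_ne ht]
  · refine le_trans ?_ (h (Function.update q ⟨T - 1, by omega⟩ false))
    rw [gLoss, if_neg (by rw [lastBit_update_last hT]; exact Bool.false_ne_true)]
    refine Finset.sum_le_sum fun t _ => ?_
    rw [history_update_last hT]
    refine div_le_div_of_nonneg_right ?_ (sub_nonneg.2 (hr t _).2.le)
    by_cases ht : t = ⟨T - 1, by omega⟩
    · subst ht
      rw [Function.update_self]
      cases q ⟨T - 1, by omega⟩ <;> norm_num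
    · rw [Function.update_of_ne ht]

/-- An optimal decisive gambler places its final bet on the winning team: the
min-max loss is unchanged when the max over the two outcomes is replaced by the
outcome equal to the gambler's final bet. -/
theorem final_bet_on_winning_team (T : ℕ) (hT : 1 ≤ T) :
    sInf { L : ℝ | ∃ r : (t : Fin T) → (Fin t → Bool) → ℝ,
        (∀ (t : Fin T) (qs : Fin t → Bool), r t qs ∈ Set.Ioo (0:ℝ) 1) ∧
        ∀ q : Fin T → Bool, skelLoss T r q ≤ L } =
    sInf { L : ℝ | ∃ r : (t : Fin T) → (Fin t → Bool) → ℝ,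
        (∀ (t : Fin T) (qs : Fin t → Bool), r t qs ∈ Set.Ioo (0:ℝ) 1) ∧
        ∀ q : Fin T → Bool, gLoss T r q ≤ L } := by
  congr 1
  ext L
  constructor
  · rintro ⟨r, hr, h⟩
    exact ⟨r, hr, fun q => (gLoss_le_skelLoss T r q).trans (h q)⟩
  · rintro ⟨r, hr, h⟩
    exact ⟨r, hr, skelLoss_le_of_forall_gLoss_le hT r hr h⟩
end

section
/- If there exists a skeleton strategy that equalizes the losses, i.e. some {r_t} such that g({r_t}, q^T) takes the same value for all q^T ∈ {0,1}^T, then the optimum is attained among equalizing strategies: the infimum over all skeleton strategies {r_t} of max_{q^T ∈ {0,1}^T} g({r_t}, q^T) equals the infimum over equalizing skeleton strategies of max_{q^T ∈ {0,1}^T} g({r_t}, q^T). -/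
/-- The bit sequence generated by a rule `F` that chooses each bit from the preceding ones,
padded with `false` from index `T` on. -/
def bitsOfRule {T : ℕ} (F : (t : Fin T) → (Fin t → Bool) → Bool) (n : ℕ) : Bool :=
  if h : n < T then F ⟨n, h⟩ (fun i => bitsOfRule F i.1) else false
termination_by n
decreasing_by exact i.2

lemma exists_bits_of_rule {T : ℕ} (F : (t : Fin T) → (Fin t → Bool) → Bool) :
    ∃ q : Fin T → Bool, ∀ t : Fin T, q t = F t (fun i => q (Fin.castLE t.2.le i)) := by
  refine ⟨fun t => bitsOfRule F t, fun t => ?_⟩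
  change bitsOfRule F t = F t (fun i => bitsOfRule F i)
  rw [bitsOfRule, dif_pos t.2]

/-- For any strategy `r'` and any rule `r`, some bet sequence makes `r'` lose at least as much
as `r`: the adversary always bets on a side to which `r'` assigns no more weight than `r` does. -/
lemma exists_gLoss_le (T : ℕ) (r r' : (t : Fin T) → (Fin t → Bool) → ℝ)
    (hr' : ∀ (t : Fin T) (qs : Fin t → Bool), r' t qs ∈ Set.Ioo (0:ℝ) 1) :
    ∃ q : Fin T → Bool, gLoss T r q ≤ gLoss T r' q := by
  obtain ⟨q, hq⟩ := exists_bits_of_rule (T := T) (fun t qs => decide (r' t qs < r t qs))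
  refine ⟨q, ?_⟩
  unfold gLoss
  split_ifs
  · refine Finset.sum_le_sum fun t _ => ?_
    cases hb : q t with
    | false => simp
    | true =>
      have hlt := of_decide_eq_true ((hq t).symm.trans hb)
      simpa using inv_anti₀ (hr' t _).1 hlt.le
  · refine Finset.sum_le_sum fun t _ => ?_
    cases hb : q t with
    | true => simp
    | false =>
      have hge := not_lt.mp (of_decide_eq_false ((hq t).symm.trans hb))
      simpa using inv_anti₀ (sub_pos.mpr (hr' t _).2) (sub_le_sub_left hge 1)

/-- If some skeleton strategy equalizes the losses `g({r_t}, q^T)` over all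
decisive bet sequences, then the optimum is attained among equalizing
strategies. -/
theorem equalizing_strategies_optimal (T : ℕ) (hT : 1 ≤ T)
    (hex : ∃ r : (t : Fin T) → (Fin t → Bool) → ℝ,
      (∀ (t : Fin T) (qs : Fin t → Bool), r t qs ∈ Set.Ioo (0:ℝ) 1) ∧
      ∃ c : ℝ, ∀ q : Fin T → Bool, gLoss T r q = c) :
    sInf { L : ℝ | ∃ r : (t : Fin T) → (Fin t → Bool) → ℝ,
        (∀ (t : Fin T) (qs : Fin t → Bool), r t qs ∈ Set.Ioo (0:ℝ) 1) ∧
        ∀ q : Fin T → Bool, gLoss T r q ≤ L } =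
    sInf { L : ℝ | ∃ r : (t : Fin T) → (Fin t → Bool) → ℝ,
        (∀ (t : Fin T) (qs : Fin t → Bool), r t qs ∈ Set.Ioo (0:ℝ) 1) ∧
        (∃ c : ℝ, ∀ q : Fin T → Bool, gLoss T r q = c) ∧
        ∀ q : Fin T → Bool, gLoss T r q ≤ L } := by
  obtain ⟨r, hr, c, hc⟩ := hex
  have lower : ∀ r' : (t : Fin T) → (Fin t → Bool) → ℝ,
      (∀ (t : Fin T) (qs : Fin t → Bool), r' t qs ∈ Set.Ioo (0:ℝ) 1) →
      ∀ L : ℝ, (∀ q : Fin T → Bool, gLoss T r' q ≤ L) → c ≤ L := by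
    intro r' hr' L hL
    obtain ⟨q, hq⟩ := exists_gLoss_le T r r' hr'
    exact (hc q).symm.le.trans (hq.trans (hL q))
  trans c
  · refine IsLeast.csInf_eq ⟨⟨r, hr, fun q => (hc q).le⟩, ?_⟩
    rintro L ⟨r', hr', hL⟩
    exact lower r' hr' L hL
  · symm
    refine IsLeast.csInf_eq ⟨⟨r, hr, ⟨c, hc⟩, fun q => (hc q).le⟩, ?_⟩
    rintro L ⟨r', hr', -, hL⟩
    exact lower r' hr' L hL
end

section
/- For every integer d ≥ 1 and every real x > d + 1, set r = 1 − x/((x−d)² + d) and y = f_{d+1}(x). Then r ∈ (0,1), y > d + 1, and the pair of balancing equations holds: x = 1/(1−r) + f_d(y) and y = 1/r + f_d(x). Moreover r is the unique number in (0,1) for which these two equations admit a solution with y = f_{d+1}(x). -/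
/-!
Put `x = d + 1 + t` with `t > 0`. Everything becomes a positive rational function of `d` and `t`:
`r = t (t + 1) / ((t + 1)² + d)`, `1 - r = x / ((t + 1)² + d)`, `y = (d + 1)(t + 1) / t` and
`y - d = x / t`. The bounds are then immediate and the two balancing equations are polynomial
identities after clearing denominators. Uniqueness holds since `y = 1 / r + f_d(x)` determines `r`.
-/

/-- `f_d(x) = d·(x−(d−1))/(x−d)`. -/
noncomputable def fd (d : ℕ) (x : ℝ) : ℝ := d * (x - ((d : ℝ) - 1)) / (x - d)

/-- Attaching a new root with odd `r = 1 − x/((x−d)² + d)` to a left sub-tree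
with value function `(f_d(y), y)` and a right sub-tree with value function
`(x, f_d(x))`, where `y = f_{d+1}(x)`, produces a bi-balanced tree: `r ∈ (0,1)`,
`y > d + 1`, the balancing equations `x = 1/(1−r) + f_d(y)` and
`y = 1/r + f_d(x)` hold, and `r` is the unique number in `(0,1)` for which they
admit a solution with `y = f_{d+1}(x)`. -/
theorem root_attachment (d : ℕ) (hd : 1 ≤ d) (x : ℝ) (hx : (d : ℝ) + 1 < x)
    (r y : ℝ) (hr : r = 1 - x / ((x - d) ^ 2 + d)) (hy : y = fd (d + 1) x) :
    r ∈ Set.Ioo (0:ℝ) 1 ∧ (d : ℝ) + 1 < y ∧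
    x = 1 / (1 - r) + fd d y ∧ y = 1 / r + fd d x ∧
    ∀ r' ∈ Set.Ioo (0:ℝ) 1,
      (x = 1 / (1 - r') + fd d y ∧ y = 1 / r' + fd d x) → r' = r := by
  obtain ⟨t, rfl⟩ : ∃ t, x = d + 1 + t := ⟨x - (d + 1), by ring⟩
  have ht : 0 < t := by linarith
  have hd0 : (0:ℝ) < d := by exact_mod_cast hd
  have hD : (0:ℝ) < (t + 1) ^ 2 + d := by positivity
  have hx0 : (0:ℝ) < d + 1 + t := by positivity
  have hr1 : r = t * (t + 1) / ((t + 1) ^ 2 + d) := by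
    rw [hr, show (d:ℝ) + 1 + t - d = t + 1 by ring]
    field_simp
    ring
  have hr2 : 1 - r = (d + 1 + t) / ((t + 1) ^ 2 + d) := by
    rw [hr1]
    field_simp
    ring
  have hy1 : y = (d + 1) * (t + 1) / t := by
    rw [hy, fd]
    push_cast
    congr 1 <;> ring
  have hyd : y - d = (d + 1 + t) / t := by
    rw [hy1]
    field_simp
    ring
  have hfx : fd d (d + 1 + t) = d * (t + 2) / (t + 1) := by
    rw [fd]
    congr 1 <;> ring
  have hfy : fd d y = d * (d + 1 + 2 * t) / (d + 1 + t) := by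
    rw [fd, show y - ((d:ℝ) - 1) = (y - d) + 1 by ring, hyd]
    field_simp
    ring
  have hr0 : 0 < r := by rw [hr1]; positivity
  have hr1' : 0 < 1 - r := by rw [hr2]; positivity
  have e2 : y = 1 / r + fd d (d + 1 + t) := by
    rw [hfx, hr1, hy1]
    field_simp
    ring
  refine ⟨⟨hr0, by linarith⟩, ?_, ?_, e2, ?_⟩
  · have h : y - (d + 1) = (d + 1) / t := by
      rw [hy1]
      field_simp
      ring
    have : 0 < ((d:ℝ) + 1) / t := by positivity
    linarith
  · rw [hfy, hr2]
    field_simp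
    ring
  -- The second balancing equation alone determines the reciprocal of the odd.
  · rintro r' - ⟨-, h⟩
    have h' : 1 / r' = 1 / r := by linarith
    simpa using h'
end

section
/- Let T ≥ 1 be an integer, L = T + √T, and 0 < ε ≤ 1/(2L). Let {r̄_t} be a binary house strategy whose individual game loss is at most L for every q^T ∈ [0,1]^T, and let {r̂_t} be another binary house strategy satisfying |r̂_t(q^{t−1}) − r̄_t(q^{t−1})| ≤ ε for all t = 1,…,T and all q^{t−1} ∈ [0,1]^{t−1}. Then for every q^T ∈ [0,1]^T, the individual game loss of {r̂_t} satisfies max{ Σ_{t=1}^T q_t / r̂_t(q^{t−1}) , Σ_{t=1}^T (1−q_t)/(1−r̂_t(q^{t−1})) } ≤ (1 + 2εL)·L. -/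
lemma div_le_of_perturb {L ε a b w : ℝ} (hL : 0 < L) (hε0 : 0 < ε) (hε : ε * L ≤ 1 / 2)
    (ha : 0 < a) (hb : 0 < b) (hw : 0 ≤ w) (haL : 1 / a ≤ L) (hab : a - b ≤ ε) :
    w / b ≤ (1 + 2 * ε * L) * (w / a) := by
  have h1 : 1 ≤ L * a := (div_le_iff₀ ha).1 haL
  have h2 : 0 ≤ 2 * ε * L := by positivity
  -- `(1 + 2εL)(a - ε) - a = ε (2La - 1 - 2εL) ≥ 0`
  have h3 : a ≤ (1 + 2 * ε * L) * b := by
    have h4 : (1 + 2 * ε * L) * (a - ε) ≤ (1 + 2 * ε * L) * b :=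
      mul_le_mul_of_nonneg_left (by linarith) (by linarith)
    have h5 : 0 ≤ ε * (2 * (L * a) - 1 - 2 * (ε * L)) :=
      mul_nonneg hε0.le (by linarith)
    linarith
  rw [← mul_div_assoc, div_le_div_iff₀ hb ha]
  linarith [mul_le_mul_of_nonneg_left h3 hw]

/-- If the loss is at most `L` on every bet sequence, then along any history both `r_t` and
`1 - r_t` have reciprocal at most `L`. -/
lemma inv_le_of_contLoss_le {T : ℕ} {L : ℝ} {r : (t : Fin T) → (Fin t → ℝ) → ℝ}
    (hr : ∀ (t : Fin T) (qs : Fin t → ℝ),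
        (∀ i, qs i ∈ Set.Icc (0:ℝ) 1) → r t qs ∈ Set.Ioo (0:ℝ) 1)
    (hL : ∀ q : Fin T → ℝ, (∀ t, q t ∈ Set.Icc (0:ℝ) 1) → contLoss T r q ≤ L)
    {q : Fin T → ℝ} (hq : ∀ t, q t ∈ Set.Icc (0:ℝ) 1) (t : Fin T) :
    1 / r t (fun i => q (Fin.castLE t.2.le i)) ≤ L ∧
      1 / (1 - r t (fun i => q (Fin.castLE t.2.le i))) ≤ L := by
  have hmem : ∀ x ∈ Set.Icc (0:ℝ) 1, ∀ s, Function.update q t x s ∈ Set.Icc (0:ℝ) 1 := by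
    intro x hx s
    rcases eq_or_ne s t with rfl | hs
    · simpa using hx
    · simpa [Function.update_of_ne hs] using hq s
  -- changing the `t`-th bet does not affect the history seen at time `t`
  have hpre : ∀ x : ℝ, (fun i : Fin t => Function.update q t x (Fin.castLE t.2.le i)) =
      fun i => q (Fin.castLE t.2.le i) := by
    intro x
    funext i
    apply Function.update_of_ne
    intro h
    have h1 := congrArg Fin.val h
    have h2 := i.2
    simp only [Fin.val_castLE] at h1
    omega
  constructor
  · have hm := hmem 1 (by simp)
    have h := (le_max_left _ _).trans (hL _ hm)
    refine le_trans ?_ h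
    have := Finset.single_le_sum (f := fun s : Fin T => Function.update q t 1 s /
        r s (fun i => Function.update q t 1 (Fin.castLE s.2.le i)))
      (fun s _ => div_nonneg (hm s).1 (hr s _ fun i => hm _).1.le) (Finset.mem_univ t)
    simpa only [hpre, Function.update_self] using this
  · have hm := hmem 0 (by simp)
    have h := (le_max_right _ _).trans (hL _ hm)
    refine le_trans ?_ h
    have := Finset.single_le_sum (f := fun s : Fin T => (1 - Function.update q t 0 s) /
        (1 - r s (fun i => Function.update q t 0 (Fin.castLE s.2.le i))))
      (fun s _ => div_nonneg (sub_nonneg.2 (hm s).2)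
        (sub_nonneg.2 (hr s _ fun i => hm _).2.le)) (Finset.mem_univ t)
    simpa only [hpre, Function.update_self, sub_zero] using this

/-- If `{r̄_t}` has individual game loss at most `L = T + √T` for every bet
sequence and `{r̂_t}` is pointwise within `ε ≤ 1/(2L)` of `{r̄_t}`, then the
individual game loss of `{r̂_t}` is at most `(1 + 2εL)·L`. -/
theorem approximate_strategy_loss (T : ℕ) (hT : 1 ≤ T) (ε : ℝ) (hε0 : 0 < ε)
    (hε : ε ≤ 1 / (2 * (T + Real.sqrt T)))
    (rbar rhat : (t : Fin T) → (Fin t → ℝ) → ℝ)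
    (hrbar : ∀ (t : Fin T) (qs : Fin t → ℝ),
        (∀ i, qs i ∈ Set.Icc (0:ℝ) 1) → rbar t qs ∈ Set.Ioo (0:ℝ) 1)
    (hrhat : ∀ (t : Fin T) (qs : Fin t → ℝ),
        (∀ i, qs i ∈ Set.Icc (0:ℝ) 1) → rhat t qs ∈ Set.Ioo (0:ℝ) 1)
    (hbar : ∀ q : Fin T → ℝ, (∀ t, q t ∈ Set.Icc (0:ℝ) 1) →
        contLoss T rbar q ≤ T + Real.sqrt T)
    (hclose : ∀ (t : Fin T) (qs : Fin t → ℝ), (∀ i, qs i ∈ Set.Icc (0:ℝ) 1) →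
        |rhat t qs - rbar t qs| ≤ ε) :
    ∀ q : Fin T → ℝ, (∀ t, q t ∈ Set.Icc (0:ℝ) 1) →
      contLoss T rhat q ≤
        (1 + 2 * ε * (T + Real.sqrt T)) * (T + Real.sqrt T) := by
  intro q hq
  have hT' : (1:ℝ) ≤ T := by exact_mod_cast hT
  have hLpos : (0:ℝ) < T + Real.sqrt T := by positivity
  generalize (T:ℝ) + Real.sqrt T = L at *
  have hεL : ε * L ≤ 1 / 2 := by
    rw [le_div_iff₀ (by positivity)] at hε
    linarith
  have hC : 0 ≤ 1 + 2 * ε * L := by positivity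
  have hq' : ∀ (t : Fin T) (i : Fin t), q (Fin.castLE t.2.le i) ∈ Set.Icc (0:ℝ) 1 :=
    fun t i => hq _
  have hinv := inv_le_of_contLoss_le hrbar hbar hq
  unfold contLoss at hbar ⊢
  refine max_le ?_ ?_
  · refine le_trans ?_
      (mul_le_mul_of_nonneg_left ((le_max_left _ _).trans (hbar q hq)) hC)
    rw [Finset.mul_sum]
    refine Finset.sum_le_sum fun t _ => ?_
    have h := abs_le.1 (hclose t _ (hq' t))
    exact div_le_of_perturb hLpos hε0 hεL (hrbar t _ (hq' t)).1 (hrhat t _ (hq' t)).1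
      (hq t).1 (hinv t).1 (by linarith [h.1])
  · refine le_trans ?_
      (mul_le_mul_of_nonneg_left ((le_max_right _ _).trans (hbar q hq)) hC)
    rw [Finset.mul_sum]
    refine Finset.sum_le_sum fun t _ => ?_
    have h := abs_le.1 (hclose t _ (hq' t))
    exact div_le_of_perturb hLpos hε0 hεL (sub_pos.2 (hrbar t _ (hq' t)).2)
      (sub_pos.2 (hrhat t _ (hq' t)).2) (sub_nonneg.2 (hq t).2) (hinv t).2 (by linarith [h.2])
end

section
/- Let m ≥ 2, T ≥ 1 be integers and let {φ_t} be a family of maps φ_t : [m]^{t−1} → Δ_m, t = 1,…,T, taking values in strictly positive probability vectors. Define M = max over x^T ∈ [m]^T of max_{i ∈ [m]} Σ_{t=1}^T 1{x_t = i} / φ_t(x^{t−1})(i). Then for every sequence x^T ∈ [m]^T, Σ_{t=1}^T log₂( 1 / φ_t(x^{t−1})(x_t) ) − T·H(q̂_{x^T}) ≤ T·log₂(M/T), where q̂_{x^T}(i) = (1/T)·Σ_{t=1}^T 1{x_t = i} is the empirical distribution of x^T and H(p) = Σ_{i∈[m]} p(i)·log₂(1/p(i)) is the Shannon entropy in bits.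 -/
/-!
Write `a t = 1 / φ_t(x^{t-1})(x_t)`, let `n i` be the number of occurrences of `i` in `x`, and let
`S i = ∑_{t : x_t = i} a t`, so that `S i ≤ M` by the definition of `M`. Summing by letters,
`T·H(q̂) = ∑_t log₂(T / n(x_t))`, so the claim becomes `∑_t log (n(x_t)·a t / M) ≤ 0`.
Since `log y ≤ y - 1`, the left side is at most
`∑_t n(x_t)·a t / M - T = ∑_i n i·S i / M - T ≤ ∑_i n i - T = 0`.
-/

/-- Shannon entropy in bits, `H(p) = Σ_i p(i)·log₂(1/p(i))`, with the convention
`0·log₂(1/0) = 0`. -/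
noncomputable def H2 (m : ℕ) (p : Fin m → ℝ) : ℝ :=
  ∑ i : Fin m, if p i = 0 then 0 else p i * Real.logb 2 (1 / p i)

/-- Regrouping a sum along a sequence by letters, weighted by the letter counts. -/
lemma sum_count_mul {m T : ℕ} (x : Fin T → Fin m) (f : Fin m → ℝ) :
    ∑ i, (∑ t, if x t = i then (1 : ℝ) else 0) * f i = ∑ t, f (x t) := by
  simp_rw [Finset.sum_mul]
  rw [Finset.sum_comm]
  simp

/-- The symbol count of a letter that does occur is positive. -/
lemma count_pos {m T : ℕ} (x : Fin T → Fin m) (t : Fin T) :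
    0 < ∑ s, if x s = x t then (1 : ℝ) else 0 := by
  refine Finset.sum_pos' (fun s _ => by split_ifs <;> norm_num) ⟨t, Finset.mem_univ t, by simp⟩

/-- The empirical entropy is the ideal code length of `x` under its own empirical distribution. -/
lemma mul_H2_empirical {m T : ℕ} (hT : 1 ≤ T) (x : Fin T → Fin m) :
    T * H2 m (fun i => (1 / T : ℝ) * ∑ t : Fin T, if x t = i then 1 else 0) =
      ∑ t, Real.logb 2 (T / ∑ s, if x s = x t then (1 : ℝ) else 0) := by
  have hT0 : (T : ℝ) ≠ 0 := by positivity
  rw [← sum_count_mul x (fun i => Real.logb 2 (T / ∑ s, if x s = i then (1 : ℝ) else 0)),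
    H2, Finset.mul_sum]
  refine Finset.sum_congr rfl fun i _ => ?_
  generalize (∑ t : Fin T, if x t = i then (1 : ℝ) else 0) = n
  split_ifs with h
  · have : n = 0 := by simpa [hT0] using h
    simp [this]
  · have : 1 / ((1 / T : ℝ) * n) = T / n := by
      rw [one_div_mul_eq_div, one_div_div]
    rw [this]
    field_simp

/-- The logarithmic inequality, from `log y ≤ y - 1`, for any positive weights `a` whose
sum over each letter class is at most `M`. -/
lemma sum_log_le {m T : ℕ} (x : Fin T → Fin m) (a : Fin T → ℝ) (ha : ∀ t, 0 < a t)
    {M : ℝ} (hM : 0 < M) (hS : ∀ i, (∑ t, if x t = i then a t else 0) ≤ M) :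
    ∑ t, Real.log ((∑ s, if x s = x t then (1 : ℝ) else 0) * a t / M) ≤ 0 := by
  set n : Fin m → ℝ := fun i => ∑ s, if x s = i then (1 : ℝ) else 0 with hn
  have hn0 : ∀ i, 0 ≤ n i := fun i => Finset.sum_nonneg fun s _ => by split_ifs <;> norm_num
  have hnT : ∑ i, n i = T := by simpa only [mul_one, Finset.sum_const, Finset.card_univ, Fintype.card_fin,
    nsmul_eq_mul] using sum_count_mul x (fun _ => 1)
  have hna : ∑ t, n (x t) * a t ≤ M * T := by
    calc ∑ t, n (x t) * a t = ∑ i, n i * ∑ t, (if x t = i then a t else 0) := by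
          simp_rw [Finset.mul_sum]
          rw [Finset.sum_comm]
          simp
      _ ≤ ∑ i, n i * M := Finset.sum_le_sum fun i _ =>
          mul_le_mul_of_nonneg_left (hS i) (hn0 i)
      _ = M * T := by rw [← Finset.sum_mul, hnT, mul_comm]
  calc ∑ t, Real.log (n (x t) * a t / M) ≤ ∑ t, (n (x t) * a t / M - 1) :=
        Finset.sum_le_sum fun t _ => Real.log_le_sub_one_of_pos
          (div_pos (mul_pos (count_pos x t) (ha t)) hM)
    _ = (∑ t, n (x t) * a t) / M - T := by
        rw [Finset.sum_sub_distrib, Finset.sum_div]; simp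
    _ ≤ 0 := by
        rw [sub_nonpos, div_le_iff₀ hM]; linarith


/-- The redundancy of the universal compression scheme induced by a sequential
probability assignment `{φ_t}` is at most `T·log₂(M/T)`, where `M` is the
worst-case accumulated bookmaking loss of `{φ_t}` over decisive sequences. -/
theorem compression_redundancy_bound (m T : ℕ) (hm : 2 ≤ m) (hT : 1 ≤ T)
    (φ : (t : Fin T) → (Fin t → Fin m) → (Fin m → ℝ))
    (hφ : ∀ (t : Fin T) (xs : Fin t → Fin m),
        φ t xs ∈ stdSimplex ℝ (Fin m) ∧ ∀ i, 0 < φ t xs i)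
    (M : ℝ)
    (hM : M = ⨆ x : Fin T → Fin m, ⨆ i : Fin m, ∑ t : Fin T,
        if x t = i then 1 / φ t (fun s => x (Fin.castLE t.2.le s)) i else 0)
    (x : Fin T → Fin m) :
    (∑ t : Fin T, Real.logb 2 (1 / φ t (fun s => x (Fin.castLE t.2.le s)) (x t))) -
        T * H2 m (fun i => (1 / T : ℝ) * ∑ t : Fin T, if x t = i then 1 else 0) ≤
      T * Real.logb 2 (M / T) := by
  have hT0 : (0 : ℝ) < T := by positivity
  set a : Fin T → ℝ := fun t => 1 / φ t (fun s => x (Fin.castLE t.2.le s)) (x t) with ha_def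
  have ha : ∀ t, 0 < a t := fun t => one_div_pos.2 ((hφ t _).2 _)
  have hS : ∀ i, (∑ t, if x t = i then a t else 0) ≤ M := by
    intro i
    have h : (∑ t, if x t = i then a t else 0) = ∑ t : Fin T,
        if x t = i then 1 / φ t (fun s => x (Fin.castLE t.2.le s)) i else 0 := by
      refine Finset.sum_congr rfl fun t _ => ?_
      split_ifs with hi
      · rw [ha_def, ← hi]
      · rfl
    rw [h, hM]
    -- The index types are finite, so both suprema are over bounded families.
    exact le_ciSup_of_le (Set.finite_range _).bddAbove x
      (le_ciSup (f := fun i => ∑ t : Fin T,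
        if x t = i then 1 / φ t (fun s => x (Fin.castLE t.2.le s)) i else 0)
        (Set.finite_range _).bddAbove i)
  have hM0 : 0 < M := by
    refine lt_of_lt_of_le ?_ (hS (x ⟨0, hT⟩))
    refine Finset.sum_pos' (fun t _ => ?_) ⟨⟨0, hT⟩, Finset.mem_univ _, by simpa using ha _⟩
    split_ifs
    exacts [(ha t).le, le_rfl]
  rw [mul_H2_empirical hT]
  have key := sum_log_le x a ha hM0 hS
  have hconst : (T : ℝ) * Real.logb 2 (M / T) = ∑ _t : Fin T, Real.logb 2 (M / T) := by simp
  rw [hconst, ← Finset.sum_sub_distrib, ← sub_nonpos, ← Finset.sum_sub_distrib]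
  refine le_trans (le_of_eq ?_)
    (div_nonpos_of_nonpos_of_nonneg key (Real.log_pos one_lt_two).le)
  rw [Finset.sum_div]
  refine Finset.sum_congr rfl fun t _ => ?_
  have hn := count_pos x t
  change Real.logb 2 (a t) - _ - _ = _
  rw [Real.logb_div hT0.ne' hn.ne', Real.logb_div hM0.ne' hT0.ne',
    Real.log_div (mul_pos hn (ha t)).ne' hM0.ne', Real.log_mul hn.ne' (ha t).ne']
  simp only [Real.logb]
  ring
end
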